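/- arXiv:2504.16299 — 3 statements merged into one kernel-verified Lean document; each statement's English description precedes it below -/
import Mathlib

section
/- Let ρ and σ be density matrices on ℂ^d and let m ≥ 1. For any d^m × d^m Hermitian matrix M such that both M and I − M are positive semidefinite (a binary POVM element on m copies), the sum of the two error probabilities of the corresponding quantum test satisfies Tr[ρ^{⊗m}(I − M)] + Tr[σ^{⊗m} M] ≥ (1/4)·F(ρ,σ)^m, where ρ^{⊗m} denotes the m-fold Kronecker power of ρ. -/
open Matrix MeasureTheory ProbabilityTheory
open scoped ComplexOrder

/-- The positive semidefinite square root of a positive semidefinite matrix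
(the definition of the older Mathlib, since removed). -/
noncomputable def Matrix.PosSemidef.sqrt {n 𝕜 : Type*} [Fintype n] [RCLike 𝕜] [DecidableEq n]
    {A : Matrix n n 𝕜} (hA : A.PosSemidef) : Matrix n n 𝕜 :=
  hA.1.eigenvectorUnitary.1 * diagonal ((↑) ∘ Real.sqrt ∘ hA.1.eigenvalues) *
    (star hA.1.eigenvectorUnitary : Matrix n n 𝕜)

/-- The positive semidefinite square root of a matrix (junk value `0` if the matrix is not
positive semidefinite). -/
noncomputable def matSqrt {d : ℕ} (A : Matrix (Fin d) (Fin d) ℂ) : Matrix (Fin d) (Fin d) ℂ :=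
  open scoped Classical in
  if h : A.PosSemidef then h.sqrt else 0

/-- The quantum fidelity `F(ρ,σ) = (Tr[√(√σ ρ √σ)])²`. -/
noncomputable def fidelity {d : ℕ} (ρ σ : Matrix (Fin d) (Fin d) ℂ) : ℝ :=
  ((matSqrt (matSqrt σ * ρ * matSqrt σ)).trace.re) ^ 2

/-- The trace norm `‖A‖₁ = Tr[√(A†A)]`. -/
noncomputable def traceNorm {d : ℕ} (A : Matrix (Fin d) (Fin d) ℂ) : ℝ :=
  (matSqrt (Aᴴ * A)).trace.re

/-- The `m`-fold Kronecker (tensor) power of a `d × d` matrix. -/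
noncomputable def kronPow {d : ℕ} (A : Matrix (Fin d) (Fin d) ℂ) :
    (m : ℕ) → Matrix (Fin (d ^ m)) (Fin (d ^ m)) ℂ
  | 0 => 1
  | m + 1 =>
      Matrix.reindex (finProdFinEquiv.trans (finCongr (pow_succ d m).symm))
        (finProdFinEquiv.trans (finCongr (pow_succ d m).symm))
        (Matrix.kroneckerMap (· * ·) (kronPow A m) A)

section MatSqrt

variable {d : ℕ} {A : Matrix (Fin d) (Fin d) ℂ}

lemma matSqrt_of_posSemidef (hA : A.PosSemidef) : matSqrt A = hA.sqrt := by
  simp [matSqrt, hA]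

/-- Conjugation of diagonal matrices by a unitary is multiplicative. -/
lemma unitary_conj_diagonal_mul (U : unitary (Matrix (Fin d) (Fin d) ℂ)) (v w : Fin d → ℂ) :
    (U.1 * diagonal v * star U.1) * (U.1 * diagonal w * star U.1) =
      U.1 * diagonal (v * w) * star U.1 := by
  have hU : star U.1 * U.1 = 1 := Unitary.coe_star_mul_self U
  calc _ = U.1 * diagonal v * (star U.1 * U.1) * diagonal w * star U.1 := by
        simp only [Matrix.mul_assoc]
    _ = _ := by
        rw [hU, Matrix.mul_one, Matrix.mul_assoc U.1, diagonal_mul_diagonal]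
        rfl

lemma unitary_conj_diagonal_isHermitian (U : unitary (Matrix (Fin d) (Fin d) ℂ))
    (v : Fin d → ℝ) :
    (U.1 * diagonal (fun i => (v i : ℂ)) * star U.1).IsHermitian := by
  refine isHermitian_mul_mul_conjTranspose U.1 ?_
  exact isHermitian_diagonal_of_self_adjoint _ (by ext i; simp)

lemma matSqrt_isHermitian (hA : A.PosSemidef) : (matSqrt A).IsHermitian := by
  rw [matSqrt_of_posSemidef hA]
  exact unitary_conj_diagonal_isHermitian hA.1.eigenvectorUnitary _

lemma matSqrt_mul_self (hA : A.PosSemidef) : matSqrt A * matSqrt A = A := by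
  rw [matSqrt_of_posSemidef hA]
  refine (unitary_conj_diagonal_mul hA.1.eigenvectorUnitary _ _).trans ?_
  conv_rhs => rw [hA.1.spectral_theorem]
  rw [Unitary.conjStarAlgAut_apply]
  congr 3
  ext i
  simp [← Complex.ofReal_mul, Real.mul_self_sqrt (hA.eigenvalues_nonneg i)]

/-- The positive square root has a Hermitian pseudo-inverse. -/
lemma exists_pseudoinverse_matSqrt (hA : A.PosSemidef) :
    ∃ E : Matrix (Fin d) (Fin d) ℂ, E.IsHermitian ∧ E * A = matSqrt A ∧
      E * E * A * (E * E) = E * E := by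
  set U := hA.1.eigenvectorUnitary
  set s : Fin d → ℝ := fun i => Real.sqrt (hA.1.eigenvalues i)
  have hT : matSqrt A = U.1 * diagonal (fun i => (s i : ℂ)) * star U.1 :=
    matSqrt_of_posSemidef hA
  refine ⟨U.1 * diagonal (fun i => (((s i)⁻¹ : ℝ) : ℂ)) * star U.1,
    unitary_conj_diagonal_isHermitian U _, ?_, ?_⟩
  · conv_lhs => rw [← matSqrt_mul_self hA]
    rw [hT]
    simp only [unitary_conj_diagonal_mul]
    congr 3
    ext i
    by_cases h : s i = 0 <;> simp [h]
  · conv_lhs => rw [← matSqrt_mul_self hA]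
    rw [hT]
    simp only [unitary_conj_diagonal_mul]
    congr 3
    ext i
    by_cases h : s i = 0
    · simp [h]
    · have h' : (s i : ℂ) ≠ 0 := by exact_mod_cast h
      simp only [Pi.mul_apply, Complex.ofReal_inv]
      field_simp

/-- A partial isometry `U` with `U C = √(C† C)`. -/
lemma exists_partialIsometry_mul_eq_matSqrt (C : Matrix (Fin d) (Fin d) ℂ) :
    ∃ U : Matrix (Fin d) (Fin d) ℂ, U * C = matSqrt (Cᴴ * C) ∧
      (Uᴴ * U) * (Uᴴ * U) = Uᴴ * U := by
  obtain ⟨E, hE, hEA, hEE⟩ := exists_pseudoinverse_matSqrt (posSemidef_conjTranspose_mul_self C)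
  refine ⟨E * Cᴴ, by rw [Matrix.mul_assoc, hEA], ?_⟩
  rw [conjTranspose_mul, conjTranspose_conjTranspose, hE.eq]
  calc _ = C * (E * E * (Cᴴ * C) * (E * E)) * Cᴴ := by simp only [Matrix.mul_assoc]
    _ = _ := by rw [hEE]; simp only [Matrix.mul_assoc]

end MatSqrt

section KronPow

variable {d : ℕ}

lemma kronPow_mul (A B : Matrix (Fin d) (Fin d) ℂ) (m : ℕ) :
    kronPow (A * B) m = kronPow A m * kronPow B m := by
  induction m with
  | zero => exact (Matrix.mul_one (1 : Matrix (Fin (d ^ 0)) (Fin (d ^ 0)) ℂ)).symm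
  | succ m ih =>
    simp only [kronPow, ih, reindex_apply, submatrix_mul_equiv]
    exact congrArg (fun X => submatrix X _ _) (mul_kronecker_mul _ _ _ _)

lemma kronPow_conjTranspose (A : Matrix (Fin d) (Fin d) ℂ) (m : ℕ) :
    (kronPow A m)ᴴ = kronPow Aᴴ m := by
  induction m with
  | zero => exact conjTranspose_one
  | succ m ih =>
    simp only [kronPow, ← ih, reindex_apply, conjTranspose_submatrix]
    exact congrArg (fun X => submatrix X _ _) (conjTranspose_kronecker _ _)

lemma trace_kronPow (A : Matrix (Fin d) (Fin d) ℂ) (m : ℕ) :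
    (kronPow A m).trace = A.trace ^ m := by
  induction m with
  | zero => exact (trace_one (n := Fin (d ^ 0))).trans (by simp)
  | succ m ih =>
    rw [pow_succ A.trace, ← ih, ← trace_kronecker]
    exact Equiv.sum_comp (finProdFinEquiv.trans (finCongr (pow_succ d m).symm)).symm
      (fun i => (kroneckerMap (· * ·) (kronPow A m) A) i i)

end KronPow

section TraceBounds

variable {n : Type*} [Fintype n]

lemma Matrix.PosSemidef.trace_re_nonneg {P : Matrix n n ℂ} (hP : P.PosSemidef) :
    0 ≤ P.trace.re :=
  (Complex.le_def.1 hP.trace_nonneg).1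

/-- Compressing by a Hermitian idempotent does not increase the trace. -/
lemma trace_mul_idempotent_re_le [DecidableEq n] {P Q : Matrix n n ℂ} (hP : P.PosSemidef)
    (hQ : Q.IsHermitian) (hQQ : Q * Q = Q) : (P * Q).trace.re ≤ P.trace.re := by
  have hH : (1 - Q)ᴴ = 1 - Q := by rw [conjTranspose_sub, conjTranspose_one, hQ.eq]
  have h := (hP.conjTranspose_mul_mul_same (1 - Q)).trace_re_nonneg
  have hI : (1 - Q) * (1 - Q) = 1 - Q := by
    rw [Matrix.sub_mul, Matrix.one_mul, Matrix.mul_sub, Matrix.mul_one, hQQ, sub_self, sub_zero]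
  rw [hH, Matrix.mul_assoc, trace_mul_comm, Matrix.mul_assoc, hI, Matrix.mul_sub,
    Matrix.mul_one, trace_sub, Complex.sub_re] at h
  linarith

/-- The quadratic form of Cauchy–Schwarz for the semi-inner product `Tr[X† M Y]`. -/
lemma two_mul_trace_re_le {M : Matrix n n ℂ} (hM : M.PosSemidef) (X Y : Matrix n n ℂ)
    (s t : ℝ) :
    2 * (s * t) * (Xᴴ * M * Y).trace.re ≤
      s ^ 2 * (Xᴴ * M * X).trace.re + t ^ 2 * (Yᴴ * M * Y).trace.re := by
  have h := (hM.conjTranspose_mul_mul_same ((s : ℂ) • X - (t : ℂ) • Y)).trace_re_nonneg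
  have hc : (Yᴴ * M * X).trace.re = (Xᴴ * M * Y).trace.re := by
    have : Yᴴ * M * X = (Xᴴ * M * Y)ᴴ := by
      simp [conjTranspose_mul, hM.1.eq, Matrix.mul_assoc]
    rw [this, trace_conjTranspose]
    simp
  simp only [conjTranspose_sub, conjTranspose_smul, Matrix.sub_mul, Matrix.mul_sub, trace_sub,
    Matrix.smul_mul, Matrix.mul_smul, trace_smul, smul_eq_mul, Complex.sub_re,
    Complex.star_def, Complex.conj_ofReal, Complex.re_ofReal_mul, hc] at h
  linarith

/-- Total error of a binary test between `A²` and `B²`, bounded below by an overlap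
`Tr[W A B]` with `W` a partial isometry. -/
lemma sq_trace_re_le_two_mul_total_error [DecidableEq n] {A B W M : Matrix n n ℂ}
    (hA : A.IsHermitian) (hB : B.IsHermitian)
    (hAtr : (A * A).trace = 1) (hBtr : (B * B).trace = 1)
    (hW : (Wᴴ * W) * (Wᴴ * W) = Wᴴ * W)
    (hM : M.PosSemidef) (hIM : (1 - M).PosSemidef) :
    (W * A * B).trace.re ^ 2 ≤
      2 * ((A * A * (1 - M)).trace.re + (B * B * M).trace.re) := by
  have hX : (A * Wᴴ)ᴴ = W * A := by rw [conjTranspose_mul, conjTranspose_conjTranspose, hA.eq]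
  have hleft : ∀ N : Matrix n n ℂ, N.PosSemidef →
      ((A * Wᴴ)ᴴ * N * (A * Wᴴ)).trace.re ≤ (A * A * N).trace.re := by
    intro N hN
    have hP := hN.conjTranspose_mul_mul_same A
    have h := trace_mul_idempotent_re_le hP (isHermitian_conjTranspose_mul_self W) hW
    rw [hA.eq] at h
    have h1 : ((A * Wᴴ)ᴴ * N * (A * Wᴴ)).trace = (A * N * A * (Wᴴ * W)).trace := by
      rw [hX, ← Matrix.mul_assoc (A * N * A), trace_mul_comm _ W]
      simp only [Matrix.mul_assoc]
    have h2 : (A * A * N).trace = (A * N * A).trace := by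
      rw [trace_mul_comm (A * N), Matrix.mul_assoc]
    rw [h1, h2]
    exact h
  have hright : ∀ N : Matrix n n ℂ, (Bᴴ * N * B).trace = (B * B * N).trace := by
    intro N
    rw [hB.eq, trace_mul_comm, Matrix.mul_assoc]
  have hsplit : (W * A * B).trace.re =
      ((A * Wᴴ)ᴴ * M * B).trace.re + ((A * Wᴴ)ᴴ * (1 - M) * B).trace.re := by
    rw [hX, ← Complex.add_re, ← trace_add, ← Matrix.add_mul, ← Matrix.mul_add,
      add_sub_cancel, Matrix.mul_one]
  have hAM : (A * A * M).trace.re = 1 - (A * A * (1 - M)).trace.re := by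
    rw [Matrix.mul_sub, Matrix.mul_one, trace_sub, hAtr]; simp
  have hBM : (B * B * (1 - M)).trace.re = 1 - (B * B * M).trace.re := by
    rw [Matrix.mul_sub, Matrix.mul_one, trace_sub, hBtr]; simp
  set α := (A * A * (1 - M)).trace.re
  set β := (B * B * M).trace.re
  have hquad : ∀ t : ℝ, 0 ≤ (α + β) * (t * t) + (-2 * (W * A * B).trace.re) * t +
      (2 - (α + β)) := by
    intro t
    have h1 := two_mul_trace_re_le hM (A * Wᴴ) B 1 t
    have h2 := two_mul_trace_re_le hIM (A * Wᴴ) B t 1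
    have h3 := hleft M hM
    have h4 := mul_le_mul_of_nonneg_left (hleft (1 - M) hIM) (sq_nonneg t)
    rw [hright] at h1 h2
    rw [hsplit]
    rw [hAM] at h3
    rw [hBM] at h2
    linarith
  have hd := discrim_le_zero hquad
  rw [discrim] at hd
  nlinarith [sq_nonneg (α + β)]

end TraceBounds

/-- Lower bound on total error of any binary quantum test on `m` copies:
`Tr[ρ^{⊗m}(I−M)] + Tr[σ^{⊗m} M] ≥ (1/4)·F(ρ,σ)^m`. -/
theorem total_error_lower_bound {d : ℕ}
    (ρ σ : Matrix (Fin d) (Fin d) ℂ)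
    (hρ : ρ.PosSemidef) (hρtr : ρ.trace = 1)
    (hσ : σ.PosSemidef) (hσtr : σ.trace = 1)
    (m : ℕ) (hm : 1 ≤ m)
    (M : Matrix (Fin (d ^ m)) (Fin (d ^ m)) ℂ)
    (hMH : M.IsHermitian) (hM : M.PosSemidef) (hIM : (1 - M).PosSemidef) :
    ((kronPow ρ m) * (1 - M)).trace.re + ((kronPow σ m) * M).trace.re ≥
      (1 / 4) * (fidelity ρ σ) ^ m := by
  set r := matSqrt ρ
  set s := matSqrt σ
  have hrH : r.IsHermitian := matSqrt_isHermitian hρ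
  have hsH : s.IsHermitian := matSqrt_isHermitian hσ
  have hrr : r * r = ρ := matSqrt_mul_self hρ
  have hss : s * s = σ := matSqrt_mul_self hσ
  have hC : (r * s)ᴴ * (r * s) = s * ρ * s := by
    rw [conjTranspose_mul, hrH.eq, hsH.eq, ← hrr]
    simp only [Matrix.mul_assoc]
  obtain ⟨U, hU, hUU⟩ := exists_partialIsometry_mul_eq_matSqrt (r * s)
  have hpsd : (s * ρ * s).PosSemidef := hC ▸ posSemidef_conjTranspose_mul_self (r * s)
  rw [hC] at hU
  have hherm : ∀ {X : Matrix (Fin d) (Fin d) ℂ}, X.IsHermitian → (kronPow X m).IsHermitian :=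
    fun h => (kronPow_conjTranspose _ m).trans (by rw [h.eq])
  have hreal : (matSqrt (s * ρ * s)).trace = ((matSqrt (s * ρ * s)).trace.re : ℂ) := by
    refine (Complex.conj_eq_iff_re.1 ?_).symm
    rw [← Complex.star_def, ← trace_conjTranspose, (matSqrt_isHermitian hpsd).eq]
  have hkey := sq_trace_re_le_two_mul_total_error (A := kronPow r m) (B := kronPow s m)
    (W := kronPow U m) (hherm hrH) (hherm hsH)
    (by rw [← kronPow_mul, hrr, trace_kronPow, hρtr, one_pow])
    (by rw [← kronPow_mul, hss, trace_kronPow, hσtr, one_pow])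
    (by rw [kronPow_conjTranspose, ← kronPow_mul, ← kronPow_mul, hUU]) hM hIM
  rw [← kronPow_mul, ← kronPow_mul, ← kronPow_mul, ← kronPow_mul, hrr, hss, trace_kronPow,
    Matrix.mul_assoc, hU, hreal, ← Complex.ofReal_pow, Complex.ofReal_re, ← pow_mul, mul_comm m 2,
    pow_mul] at hkey
  have hF : 0 ≤ fidelity ρ σ ^ m := pow_nonneg (sq_nonneg _) m
  change fidelity ρ σ ^ m ≤ _ at hkey
  linarith
end

section
/- (Pauli operator concentration.) Let σ be a density matrix on ℂ². Let m = 3n with n ≥ 1, and for each K ∈ {X, Y, Z} let X_{K,1}, …, X_{K,n} be i.i.d. real random variables taking values in [−1, 1] with mean E[X_{K,ℓ}] = Tr[σ_K σ] (the true Bloch coordinate, a real number), the three families being mutually independent. Define the empirical Bloch coordinates r̂_K = (1/n)·Σ_{ℓ=1}^n X_{K,ℓ} and the reconstructed state σ̂ = (1/2)·(I₂ + r̂_X σ_X + r̂_Y σ_Y + r̂_Z σ_Z). Then for every ε > 0, ℙ(‖σ − σ̂‖₁ > ε) ≤ 6·exp(−m ε² / 54). -/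
open Matrix MeasureTheory ProbabilityTheory
open scoped ComplexOrder

/-- The three Pauli matrices `σ_X, σ_Y, σ_Z`. -/
noncomputable def pauli : Fin 3 → Matrix (Fin 2) (Fin 2) ℂ :=
  ![!![0, 1; 1, 0], !![0, -Complex.I; Complex.I, 0], !![1, 0; 0, -1]]

/-- Cauchy–Schwarz bound of the trace norm by the Frobenius norm. -/
theorem traceNorm_le_sqrt_trace {d : ℕ} (A : Matrix (Fin d) (Fin d) ℂ) :
    traceNorm A ≤ √(d * (Aᴴ * A).trace.re) := by
  have hA : (Aᴴ * A).PosSemidef := posSemidef_conjTranspose_mul_self A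
  have htrace : traceNorm A = ∑ i, √(hA.1.eigenvalues i) := by
    rw [traceNorm, matSqrt, dif_pos hA, Matrix.PosSemidef.sqrt, trace_mul_comm, ← mul_assoc,
      Unitary.coe_star_mul_self, one_mul, trace_diagonal]
    simp
  have heig : (Aᴴ * A).trace.re = ∑ i, hA.1.eigenvalues i := by
    rw [hA.1.trace_eq_sum_eigenvalues]
    simp
  rw [htrace, heig]
  refine Real.le_sqrt_of_sq_le ?_
  refine (sq_sum_le_card_mul_sum_sq (s := Finset.univ)).trans_eq ?_
  simp [Real.sq_sqrt (hA.eigenvalues_nonneg _)]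

/-- The trace distance between a Hermitian matrix of trace one and a matrix given by Bloch
coordinates `r` is at most the Euclidean distance between the Bloch vectors. -/
theorem traceNorm_sub_bloch_le_sqrt {σ : Matrix (Fin 2) (Fin 2) ℂ} (hσ : σ.IsHermitian)
    (hσtr : σ.trace = 1) (r : Fin 3 → ℝ) :
    traceNorm (σ - (1 / 2 : ℂ) • (1 + ∑ K, (r K : ℂ) • pauli K)) ≤
      √(∑ K, (r K - (pauli K * σ).trace.re) ^ 2) := by
  refine (traceNorm_le_sqrt_trace _).trans_eq ?_
  congr 1
  have h00 := congrArg Complex.im (hσ.apply 0 0)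
  have h11 := congrArg Complex.im (hσ.apply 1 1)
  have hre := congrArg Complex.re (hσ.apply 0 1)
  have him := congrArg Complex.im (hσ.apply 0 1)
  have htr := congrArg Complex.re hσtr
  simp [trace_fin_two] at h00 h11 hre him htr
  have h00' : (σ 0 0).im = 0 := by linarith
  have h11' : (σ 1 1).im = 0 := by linarith
  have htr' : (σ 1 1).re = 1 - (σ 0 0).re := by linarith
  simp [pauli, trace_fin_two, mul_apply, Fin.sum_univ_three, one_apply, h00', h11', htr', hre, ← him]
  ring

/-- The Euclidean norm is at most the sum of the absolute values of three coordinates, so one of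
them exceeds a third of any smaller number. -/
theorem exists_div_three_lt_abs_of_lt_sqrt {v : Fin 3 → ℝ} {ε : ℝ} (h : ε < √(∑ K, v K ^ 2)) :
    ∃ K, ε / 3 < |v K| := by
  by_contra! hv
  have hε : 0 ≤ ε := by linarith [hv 0, abs_nonneg (v 0)]
  refine h.not_ge (Real.sqrt_le_iff.2 ⟨hε, ?_⟩)
  have hsq (K) : v K ^ 2 ≤ (ε / 3) ^ 2 := sq_le_sq' (abs_le.1 (hv K)).1 (abs_le.1 (hv K)).2
  rw [Fin.sum_univ_three]
  nlinarith [hsq 0, hsq 1, hsq 2, sq_nonneg ε]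

/-- **Hoeffding's inequality** for the empirical mean of variables with values in `[-1, 1]`. -/
theorem measureReal_le_empirical_mean_sub_le {Ω : Type*} [MeasurableSpace Ω] {μ : Measure Ω}
    [IsProbabilityMeasure μ] {n : ℕ} (hn : 1 ≤ n) {Y : Fin n → Ω → ℝ} {r : ℝ}
    (hmeas : ∀ ℓ, Measurable (Y ℓ)) (hbdd : ∀ ℓ ω, Y ℓ ω ∈ Set.Icc (-1 : ℝ) 1)
    (hmean : ∀ ℓ, ∫ ω, Y ℓ ω ∂μ = r) (hindep : iIndepFun Y μ) {t : ℝ} (ht : 0 ≤ t) :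
    μ.real {ω | t ≤ (1 / n : ℝ) * ∑ ℓ, Y ℓ ω - r} ≤ Real.exp (-(n : ℝ) * t ^ 2 / 2) := by
  have hn0 : (0 : ℝ) < n := by exact_mod_cast hn
  have hsub (ℓ : Fin n) : HasSubgaussianMGF (fun ω ↦ Y ℓ ω - r) 1 μ := by
    have h := hasSubgaussianMGF_of_mem_Icc (μ := μ) (hmeas ℓ).aemeasurable
      (Filter.Eventually.of_forall (hbdd ℓ))
    rw [hmean ℓ] at h
    convert h using 1
    ext
    norm_num
  have hindep' : iIndepFun (fun ℓ ω ↦ Y ℓ ω - r) μ :=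
    hindep.comp (fun _ x ↦ x - r) fun _ ↦ measurable_id.sub_const r
  have hmain := HasSubgaussianMGF.measure_sum_ge_le_of_iIndepFun hindep' (c := fun _ ↦ 1)
    (s := Finset.univ) (fun ℓ _ ↦ hsub ℓ) (mul_nonneg hn0.le ht)
  convert hmain using 2
  · ext ω
    simp only [Set.mem_ofPred_eq, Finset.sum_sub_distrib, Finset.sum_const, Finset.card_univ,
      Fintype.card_fin, nsmul_eq_mul]
    rw [← mul_le_mul_iff_of_pos_left hn0]
    field_simp
  · simp
    field_simp

/-- Two-sided **Hoeffding inequality** for the empirical mean of variables with values in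
`[-1, 1]`. -/
theorem measureReal_lt_abs_empirical_mean_sub_le {Ω : Type*} [MeasurableSpace Ω] {μ : Measure Ω}
    [IsProbabilityMeasure μ] {n : ℕ} (hn : 1 ≤ n) {Y : Fin n → Ω → ℝ} {r : ℝ}
    (hmeas : ∀ ℓ, Measurable (Y ℓ)) (hbdd : ∀ ℓ ω, Y ℓ ω ∈ Set.Icc (-1 : ℝ) 1)
    (hmean : ∀ ℓ, ∫ ω, Y ℓ ω ∂μ = r) (hindep : iIndepFun Y μ) {t : ℝ} (ht : 0 ≤ t) :
    μ.real {ω | t < |(1 / n : ℝ) * ∑ ℓ, Y ℓ ω - r|} ≤ 2 * Real.exp (-(n : ℝ) * t ^ 2 / 2) := by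
  have hupper := measureReal_le_empirical_mean_sub_le hn hmeas hbdd hmean hindep ht
  have hlower := measureReal_le_empirical_mean_sub_le hn (Y := fun ℓ ω ↦ -Y ℓ ω) (r := -r)
    (fun ℓ ↦ (hmeas ℓ).neg)
    (fun ℓ ω ↦ ⟨neg_le_neg (hbdd ℓ ω).2, neg_le.1 (hbdd ℓ ω).1⟩)
    (fun ℓ ↦ by rw [integral_neg, hmean ℓ])
    (hindep.comp (fun _ x ↦ -x) fun _ ↦ measurable_neg) ht
  have hsubset : {ω | t < |(1 / n : ℝ) * ∑ ℓ, Y ℓ ω - r|} ⊆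
      {ω | t ≤ (1 / n : ℝ) * ∑ ℓ, Y ℓ ω - r} ∪ {ω | t ≤ (1 / n : ℝ) * ∑ ℓ, -Y ℓ ω - -r} := by
    intro ω hω
    rw [Set.mem_ofPred_eq, lt_abs] at hω
    rcases hω with h | h
    · exact Or.inl h.le
    · refine Or.inr (h.le.trans_eq ?_)
      rw [Finset.sum_neg_distrib]
      ring
  calc
    _ ≤ _ := measureReal_mono hsubset
    _ ≤ _ := measureReal_union_le _ _
    _ ≤ _ := by linarith

/-- Pauli operator concentration: the tomographic estimate `σ̂` built from `m = 3n` independent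
Pauli measurements satisfies `ℙ(‖σ − σ̂‖₁ > ε) ≤ 6·exp(−mε²/54)`. -/
theorem pauli_concentration
    {Ω : Type*} [MeasurableSpace Ω] (μ : Measure Ω) [IsProbabilityMeasure μ]
    (σ : Matrix (Fin 2) (Fin 2) ℂ) (hσ : σ.PosSemidef) (hσtr : σ.trace = 1)
    (n : ℕ) (hn : 1 ≤ n) (m : ℕ) (hm : m = 3 * n)
    (X : Fin 3 → Fin n → Ω → ℝ)
    (hmeas : ∀ K ℓ, Measurable (X K ℓ))
    (hbdd : ∀ K ℓ ω, X K ℓ ω ∈ Set.Icc (-1 : ℝ) 1)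
    (hmean : ∀ K ℓ, ∫ ω, X K ℓ ω ∂μ = ((pauli K) * σ).trace.re)
    (hident : ∀ K ℓ ℓ', IdentDistrib (X K ℓ) (X K ℓ') μ μ)
    (hindep : iIndepFun (fun p : Fin 3 × Fin n => X p.1 p.2) μ)
    (rhat : Fin 3 → Ω → ℝ) (hrhat : ∀ K ω, rhat K ω = (1 / n : ℝ) * ∑ ℓ, X K ℓ ω)
    (sigmahat : Ω → Matrix (Fin 2) (Fin 2) ℂ)
    (hsig : ∀ ω, sigmahat ω = (1 / 2 : ℂ) • (1 + ∑ K, (rhat K ω : ℂ) • pauli K)) :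
    ∀ ε > (0 : ℝ), μ {ω | traceNorm (σ - sigmahat ω) > ε} ≤
      ENNReal.ofReal (6 * Real.exp (-(m : ℝ) * ε ^ 2 / 54)) := by
  intro ε hε
  have hsubset : {ω | traceNorm (σ - sigmahat ω) > ε} ⊆
      ⋃ K, {ω | ε / 3 < |(1 / n : ℝ) * ∑ ℓ, X K ℓ ω - (pauli K * σ).trace.re|} := by
    intro ω hω
    rw [Set.mem_ofPred_eq, hsig] at hω
    obtain ⟨K, hK⟩ := exists_div_three_lt_abs_of_lt_sqrt
      (hω.trans_le (traceNorm_sub_bloch_le_sqrt hσ.1 hσtr fun K ↦ rhat K ω))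
    rw [hrhat] at hK
    exact Set.mem_iUnion.2 ⟨K, hK⟩
  have hindepK (K : Fin 3) : iIndepFun (X K) μ :=
    iIndepFun.precomp (g := Prod.mk K) (Prod.mk_right_injective K) hindep
  have htail (K : Fin 3) := measureReal_lt_abs_empirical_mean_sub_le hn (hmeas K) (hbdd K) (hmean K)
    (hindepK K) (t := ε / 3) (by positivity)
  rw [← ofReal_measureReal]
  refine ENNReal.ofReal_le_ofReal ?_
  calc
    _ ≤ _ := measureReal_mono hsubset
    _ ≤ _ := measureReal_iUnion_fintype_le _
    _ ≤ ∑ _ : Fin 3, 2 * Real.exp (-(n : ℝ) * (ε / 3) ^ 2 / 2) :=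
      Finset.sum_le_sum fun K _ ↦ htail K
    _ = 6 * Real.exp (-(m : ℝ) * ε ^ 2 / 54) := by
      rw [Finset.sum_const, hm, Finset.card_univ, Fintype.card_fin, nsmul_eq_mul, ← mul_assoc]
      push_cast
      congr 2
      · norm_num
      · ring
end

section
/- (Qubit one-sample universal test.) Let σ be a density matrix on ℂ² and ρ a known density matrix on ℂ² (the nominal state). With m = 3n, construct the estimator σ̂ = (1/2)·(I₂ + r̂_X σ_X + r̂_Y σ_Y + r̂_Z σ_Z), where for each K ∈ {X,Y,Z}, r̂_K is the average of n i.i.d. random variables valued in [−1,1] with mean Tr[σ_K σ], the three families being mutually independent. Given α ∈ (0,1), set c_m = √(54·ln(6/α)/m) and accept H₀ iff ‖σ̂ − ρ‖₁ ≤ c_m. Then: (i) if σ = ρ, the probability of rejecting H₀ is at most α; and (ii) if σ ≠ ρ and c_m < ‖ρ − σ‖₁, the probability of accepting H₀ is at most 6·exp(−m·(‖ρ − σ‖₁ − c_m)²/54). -/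
open Matrix MeasureTheory ProbabilityTheory
open scoped ComplexOrder

theorem Matrix.IsHermitian.eigenvalues_eq_of_eq_smul_one {d : ℕ} {B : Matrix (Fin d) (Fin d) ℂ}
    (hB : B.IsHermitian) {b : ℝ} (h : B = (b : ℂ) • 1) (i : Fin d) : hB.eigenvalues i = b := by
  have key := hB.mulVec_eigenvectorBasis i
  have hmul (w : Fin d → ℂ) : B *ᵥ w = (b : ℂ) • w := by rw [h, smul_mulVec, one_mulVec]
  rw [hmul] at key
  have hne : (hB.eigenvectorBasis i) ≠ 0 := hB.eigenvectorBasis.orthonormal.ne_zero i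
  obtain ⟨j, hj⟩ : ∃ j, hB.eigenvectorBasis i j ≠ 0 := by
    by_contra! hzero
    exact hne (by ext j; simpa using hzero j)
  have := congrFun key j
  simp only [Pi.smul_apply, smul_eq_mul, Complex.real_smul] at this
  exact Complex.ofReal_injective (mul_right_cancel₀ hj this).symm

theorem Matrix.PosSemidef.trace_sqrt {d : ℕ} {B : Matrix (Fin d) (Fin d) ℂ}
    (hB : B.PosSemidef) : hB.sqrt.trace = ∑ i, (Real.sqrt (hB.1.eigenvalues i) : ℂ) := by
  rw [Matrix.PosSemidef.sqrt, Matrix.trace_mul_cycle]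
  simp [Matrix.trace]

/-- A scalar multiple of an isometry has trace norm `d` times the modulus of the scalar. -/
theorem traceNorm_of_conjTranspose_mul_self_eq_smul_one {d : ℕ} {A : Matrix (Fin d) (Fin d) ℂ}
    {a : ℝ} (ha : 0 ≤ a) (h : Aᴴ * A = ((a ^ 2 : ℝ) : ℂ) • 1) : traceNorm A = d * a := by
  have hpos := posSemidef_conjTranspose_mul_self A
  rw [traceNorm, matSqrt, dif_pos hpos, hpos.trace_sqrt]
  simp [hpos.1.eigenvalues_eq_of_eq_smul_one h, Real.sqrt_sq ha]

/-- The trace norm of a traceless Hermitian qubit operator is the length of its Bloch vector. -/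
theorem traceNorm_half_smul_sum_pauli (v : EuclideanSpace ℝ (Fin 3)) :
    traceNorm ((1 / 2 : ℂ) • ∑ K, (v K : ℂ) • pauli K) = ‖v‖ := by
  rw [traceNorm_of_conjTranspose_mul_self_eq_smul_one (a := ‖v‖ / 2) (by positivity)]
  · push_cast; ring
  · rw [div_pow, EuclideanSpace.real_norm_sq_eq]
    ext i j
    fin_cases i <;> fin_cases j <;>
    · simp [pauli, Fin.sum_univ_three, Matrix.mul_apply, Fin.sum_univ_two, Complex.conj_ofNat]
      ring_nf
      try simp only [Complex.I_sq]
      try ring_nf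

/-- The Bloch vector of a qubit operator. -/
noncomputable def blochVector (ρ : Matrix (Fin 2) (Fin 2) ℂ) : EuclideanSpace ℝ (Fin 3) :=
  WithLp.toLp 2 fun K => (pauli K * ρ).trace.re

theorem eq_half_smul_one_add_sum_blochVector {ρ : Matrix (Fin 2) (Fin 2) ℂ}
    (hρ : ρ.IsHermitian) (htr : ρ.trace = 1) :
    ρ = (1 / 2 : ℂ) • (1 + ∑ K, (blochVector ρ K : ℂ) • pauli K) := by
  have h00 := congrArg Complex.im (hρ.apply 0 0)
  have h11 := congrArg Complex.im (hρ.apply 1 1)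
  have h01r := congrArg Complex.re (hρ.apply 0 1)
  have h01i := congrArg Complex.im (hρ.apply 0 1)
  have htr' := congrArg Complex.re htr
  simp [Matrix.trace, Fin.sum_univ_two] at h00 h11 h01r h01i htr'
  ext i j
  fin_cases i <;> fin_cases j <;> apply Complex.ext <;>
    simp [blochVector, pauli, Fin.sum_univ_three, Matrix.trace, Matrix.mul_apply,
      Fin.sum_univ_two] <;> linarith

theorem traceNorm_half_smul_sub (u v : EuclideanSpace ℝ (Fin 3)) :
    traceNorm ((1 / 2 : ℂ) • (1 + ∑ K, (u K : ℂ) • pauli K) -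
      (1 / 2 : ℂ) • (1 + ∑ K, (v K : ℂ) • pauli K)) = ‖u - v‖ := by
  rw [← traceNorm_half_smul_sum_pauli, ← smul_sub, add_sub_add_left_eq_sub,
    ← Finset.sum_sub_distrib]
  simp [sub_smul]

theorem EuclideanSpace.norm_le_sum_abs {ι : Type*} [Fintype ι] (v : EuclideanSpace ℝ ι) :
    ‖v‖ ≤ ∑ i, |v i| := by
  rw [EuclideanSpace.norm_eq, Real.sqrt_le_left (by positivity)]
  simpa using Finset.sum_sq_le_sq_sum_of_nonneg (s := Finset.univ) (f := fun i => |v i|)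
    (fun i _ => abs_nonneg _)

/-- Hoeffding's inequality, one-sided. -/
theorem measureReal_le_sum_sub_integral {Ω : Type*} [MeasurableSpace Ω] {μ : Measure Ω}
    [IsProbabilityMeasure μ] {n : ℕ} {X : Fin n → Ω → ℝ} (hmeas : ∀ ℓ, Measurable (X ℓ))
    (hbdd : ∀ ℓ ω, X ℓ ω ∈ Set.Icc (-1 : ℝ) 1) (hindep : iIndepFun X μ) {r : ℝ}
    (hmean : ∀ ℓ, ∫ ω, X ℓ ω ∂μ = r) {s : ℝ} (hs : 0 ≤ s) :
    μ.real {ω | n * s ≤ ∑ ℓ, (X ℓ ω - r)} ≤ Real.exp (-(n * s ^ 2) / 2) := by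
  have hsub : ∀ ℓ ∈ Finset.univ, HasSubgaussianMGF (fun ω => X ℓ ω - r) 1 μ := by
    intro ℓ _
    have := hasSubgaussianMGF_of_mem_Icc (hmeas ℓ).aemeasurable (ae_of_all μ (hbdd ℓ))
    rw [hmean ℓ] at this
    convert this using 1
    ext
    norm_num
  have h := HasSubgaussianMGF.measure_sum_ge_le_of_iIndepFun
    (hindep.comp (fun _ x => x - r) fun _ => by fun_prop) hsub (ε := n * s) (by positivity)
  refine h.trans (Real.exp_le_exp.2 (le_of_eq ?_))
  rcases eq_or_ne n 0 with rfl | hn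
  · simp
  · have : (n : ℝ) ≠ 0 := by exact_mod_cast hn
    simp
    field_simp

/-- Hoeffding's inequality for the average of `[-1, 1]`-valued variables. -/
theorem measureReal_le_abs_average_sub_integral {Ω : Type*} [MeasurableSpace Ω] {μ : Measure Ω}
    [IsProbabilityMeasure μ] {n : ℕ} (hn : 1 ≤ n) {X : Fin n → Ω → ℝ}
    (hmeas : ∀ ℓ, Measurable (X ℓ)) (hbdd : ∀ ℓ ω, X ℓ ω ∈ Set.Icc (-1 : ℝ) 1)
    (hindep : iIndepFun X μ) {r : ℝ} (hmean : ∀ ℓ, ∫ ω, X ℓ ω ∂μ = r) {s : ℝ} (hs : 0 ≤ s) :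
    μ.real {ω | s ≤ |(1 / n : ℝ) * ∑ ℓ, X ℓ ω - r|} ≤ 2 * Real.exp (-(n * s ^ 2) / 2) := by
  have hn0 : (0 : ℝ) < n := by exact_mod_cast hn
  have upper := measureReal_le_sum_sub_integral hmeas hbdd hindep hmean hs
  have lower := measureReal_le_sum_sub_integral (X := fun ℓ ω => -X ℓ ω) (μ := μ) (r := -r)
    (fun ℓ => (hmeas ℓ).neg)
    (fun ℓ ω => ⟨by linarith [(hbdd ℓ ω).2], by linarith [(hbdd ℓ ω).1]⟩)
    (hindep.comp (fun _ x => -x) fun _ => measurable_neg)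
    (fun ℓ => by rw [integral_neg, hmean]) hs
  have hcover : {ω | s ≤ |(1 / n : ℝ) * ∑ ℓ, X ℓ ω - r|} ⊆
      {ω | n * s ≤ ∑ ℓ, (X ℓ ω - r)} ∪ {ω | n * s ≤ ∑ ℓ, (-X ℓ ω - -r)} := by
    intro ω hω
    have hscale : n * ((1 / n : ℝ) * ∑ ℓ, X ℓ ω - r) = ∑ ℓ, X ℓ ω - n * r := by field_simp
    simp only [Set.mem_union, Set.mem_ofPred_eq, Finset.sum_sub_distrib, Finset.sum_neg_distrib,
      Finset.sum_const, Finset.card_univ, Fintype.card_fin, nsmul_eq_mul]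
    rcases le_abs.1 hω.out with h | h
    · left; linarith [mul_le_mul_of_nonneg_left h hn0.le]
    · right; linarith [mul_le_mul_of_nonneg_left h hn0.le]
  calc _ ≤ _ := measureReal_mono hcover
    _ ≤ _ := measureReal_union_le _ _
    _ ≤ _ := by linarith

/-- Concentration of the empirical Bloch vector around its mean. -/
theorem measureReal_le_norm_average_sub_integral {Ω : Type*} [MeasurableSpace Ω] {μ : Measure Ω}
    [IsProbabilityMeasure μ] {n : ℕ} (hn : 1 ≤ n) {X : Fin 3 → Fin n → Ω → ℝ}
    (hmeas : ∀ K ℓ, Measurable (X K ℓ)) (hbdd : ∀ K ℓ ω, X K ℓ ω ∈ Set.Icc (-1 : ℝ) 1)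
    (hindep : ∀ K, iIndepFun (X K) μ) {r : EuclideanSpace ℝ (Fin 3)}
    (hmean : ∀ K ℓ, ∫ ω, X K ℓ ω ∂μ = r K) {t : ℝ} (ht : 0 ≤ t) :
    μ.real {ω | t ≤ ‖WithLp.toLp 2 (fun K => (1 / n : ℝ) * ∑ ℓ, X K ℓ ω) - r‖} ≤
      6 * Real.exp (-(n * t ^ 2) / 18) := by
  have hcover : {ω | t ≤ ‖WithLp.toLp 2 (fun K => (1 / n : ℝ) * ∑ ℓ, X K ℓ ω) - r‖} ⊆
      ⋃ K, {ω | t / 3 ≤ |(1 / n : ℝ) * ∑ ℓ, X K ℓ ω - r K|} := by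
    intro ω hω
    by_contra hnot
    simp only [Set.mem_iUnion, Set.mem_ofPred_eq, not_exists, not_le] at hnot
    have hle := hω.out.trans (EuclideanSpace.norm_le_sum_abs _)
    simp only [Fin.sum_univ_three, PiLp.sub_apply] at hle
    linarith [hnot 0, hnot 1, hnot 2]
  calc _ ≤ _ := measureReal_mono hcover
    _ ≤ ∑ K, μ.real {ω | t / 3 ≤ |(1 / n : ℝ) * ∑ ℓ, X K ℓ ω - r K|} :=
        measureReal_iUnion_fintype_le _
    _ ≤ ∑ _K : Fin 3, 2 * Real.exp (-(n * (t / 3) ^ 2) / 2) := Finset.sum_le_sum fun K _ =>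
        measureReal_le_abs_average_sub_integral hn (hmeas K) (hbdd K) (hindep K) (hmean K)
          (by positivity)
    _ = _ := by
        rw [Finset.sum_const, Finset.card_univ, Fintype.card_fin, nsmul_eq_mul,
          show -(n * (t / 3) ^ 2) / 2 = -(n * t ^ 2) / 18 by ring]
        push_cast
        ring

/-- Qubit one-sample universal test via Pauli tomography: accepting `H₀` iff
`‖σ̂ − ρ‖₁ ≤ c_m` with `c_m = √(54·ln(6/α)/m)` gives type I error at most `α` and type II error
at most `6·exp(−m·(‖ρ−σ‖₁−c_m)²/54)`. -/
theorem qubit_one_sample_test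
    {Ω : Type*} [MeasurableSpace Ω] (μ : Measure Ω) [IsProbabilityMeasure μ]
    (σ ρ : Matrix (Fin 2) (Fin 2) ℂ)
    (hσ : σ.PosSemidef) (hσtr : σ.trace = 1)
    (hρ : ρ.PosSemidef) (hρtr : ρ.trace = 1)
    (n : ℕ) (hn : 1 ≤ n) (m : ℕ) (hm : m = 3 * n)
    (X : Fin 3 → Fin n → Ω → ℝ)
    (hmeas : ∀ K ℓ, Measurable (X K ℓ))
    (hbdd : ∀ K ℓ ω, X K ℓ ω ∈ Set.Icc (-1 : ℝ) 1)
    (hmean : ∀ K ℓ, ∫ ω, X K ℓ ω ∂μ = ((pauli K) * σ).trace.re)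
    (hident : ∀ K ℓ ℓ', IdentDistrib (X K ℓ) (X K ℓ') μ μ)
    (hindep : iIndepFun (fun p : Fin 3 × Fin n => X p.1 p.2) μ)
    (rhat : Fin 3 → Ω → ℝ) (hrhat : ∀ K ω, rhat K ω = (1 / n : ℝ) * ∑ ℓ, X K ℓ ω)
    (sigmahat : Ω → Matrix (Fin 2) (Fin 2) ℂ)
    (hsig : ∀ ω, sigmahat ω = (1 / 2 : ℂ) • (1 + ∑ K, (rhat K ω : ℂ) • pauli K))
    (α : ℝ) (hα : α ∈ Set.Ioo (0 : ℝ) 1)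
    (c : ℝ) (hc : c = Real.sqrt (54 * Real.log (6 / α) / m)) :
    (σ = ρ → μ {ω | traceNorm (sigmahat ω - ρ) > c} ≤ ENNReal.ofReal α) ∧
    (σ ≠ ρ → c < traceNorm (ρ - σ) →
      μ {ω | traceNorm (sigmahat ω - ρ) ≤ c} ≤
        ENNReal.ofReal (6 * Real.exp (-(m : ℝ) * (traceNorm (ρ - σ) - c) ^ 2 / 54))) := by
  have hn0 : (0 : ℝ) < n := by exact_mod_cast hn
  have hm0 : (m : ℝ) = 3 * n := by exact_mod_cast hm
  have hc0 : 0 ≤ c := hc ▸ Real.sqrt_nonneg _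
  set r : Ω → EuclideanSpace ℝ (Fin 3) := fun ω =>
    WithLp.toLp 2 fun K => (1 / n : ℝ) * ∑ ℓ, X K ℓ ω with hr
  have hindepK (K : Fin 3) : iIndepFun (X K) μ :=
    hindep.precomp (g := fun ℓ => (K, ℓ)) fun _ _ h => (Prod.mk.inj h).2
  have hdist {τ : Matrix (Fin 2) (Fin 2) ℂ} (hτ : τ.PosSemidef) (hτtr : τ.trace = 1) (ω : Ω) :
      traceNorm (sigmahat ω - τ) = ‖r ω - blochVector τ‖ := by
    rw [← traceNorm_half_smul_sub, ← eq_half_smul_one_add_sum_blochVector hτ.1 hτtr, hsig]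
    simp only [hrhat, hr]
  have tail {t : ℝ} (ht : 0 ≤ t) : μ {ω | t ≤ ‖r ω - blochVector σ‖} ≤
      ENNReal.ofReal (6 * Real.exp (-(m : ℝ) * t ^ 2 / 54)) := by
    rw [← ofReal_measureReal]
    refine ENNReal.ofReal_le_ofReal ?_
    rw [show -(m : ℝ) * t ^ 2 / 54 = -(n * t ^ 2) / 18 by rw [hm0]; ring]
    exact measureReal_le_norm_average_sub_integral hn hmeas hbdd hindepK hmean ht
  refine ⟨?_, fun _ hlt => ?_⟩
  · rintro rfl
    have hlog : 0 ≤ Real.log (6 / α) :=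
      Real.log_nonneg ((one_le_div hα.1).2 (by linarith [hα.2]))
    have hval : 6 * Real.exp (-(m : ℝ) * c ^ 2 / 54) = α := by
      rw [hc, Real.sq_sqrt (by positivity),
        show -(m : ℝ) * (54 * Real.log (6 / α) / m) / 54 = -Real.log (6 / α) by
          rw [hm0]; field_simp,
        Real.exp_neg, Real.exp_log (div_pos (by norm_num) hα.1)]
      field_simp
    rw [← hval]
    refine (measure_mono fun ω hω => ?_).trans (tail hc0)
    rw [Set.mem_ofPred_eq, ← hdist hσ hσtr]
    exact le_of_lt hω.out
  · have hρσ : traceNorm (ρ - σ) = ‖blochVector ρ - blochVector σ‖ := by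
      rw [← traceNorm_half_smul_sub, ← eq_half_smul_one_add_sum_blochVector hρ.1 hρtr,
        ← eq_half_smul_one_add_sum_blochVector hσ.1 hσtr]
    refine (measure_mono fun ω hω => ?_).trans (tail (sub_nonneg.2 hlt.le))
    rw [Set.mem_ofPred_eq, hdist hρ hρtr, norm_sub_rev] at hω
    rw [Set.mem_ofPred_eq, hρσ]
    linarith [norm_sub_le_norm_sub_add_norm_sub (blochVector ρ) (r ω) (blochVector σ)]
end
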